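/- arXiv:2408.07232 — 3 statements merged into one kernel-verified Lean document; each statement's English description precedes it below -/
import Mathlib

section
/- Let C be a Tor-∏-orthogonal left R-module. Then the class PG_CF(R) of projectively coresolved G_C-flat modules is right Add_R(C)-periodic: an R-module M belongs to PG_CF(R) if and only if there exists a short exact sequence 0 → M → A → G → 0 with A ∈ Add_R(C) and G ∈ PG_CF(R). -/
open CategoryTheory CategoryTheory.Limits

set_option autoImplicit false

universe u

variable {R : Type u} [CommRing R]

/-- A short exact sequence of `R`-modules encoded by two linear maps. -/
def IsSES {A B C : ModuleCat.{u} R} (f : A →ₗ[R] B) (g : B →ₗ[R] C) : Prop :=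
  Function.Injective f ∧ Function.Exact f g ∧ Function.Surjective g

/-- `Add_R(C)`: direct summands of direct sums of copies of `C`. -/
def AddClass (C : ModuleCat.{u} R) : ModuleCat.{u} R → Prop := fun M =>
  ∃ (ι : Type u) (s : M →ₗ[R] (ι →₀ C)) (p : (ι →₀ C) →ₗ[R] M), p ∘ₗ s = LinearMap.id

/-- `Prod_R(C)`: direct summands of direct products of copies of `C`. -/
def ProdClass (C : ModuleCat.{u} R) : ModuleCat.{u} R → Prop := fun M =>
  ∃ (ι : Type u) (s : M →ₗ[R] (ι → C)) (p : (ι → C) →ₗ[R] M), p ∘ₗ s = LinearMap.id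

/-- The character module `C⁺ = Hom_ℤ(C, ℚ/ℤ)` as an `R`-module. -/
noncomputable def charM (C : ModuleCat.{u} R) : ModuleCat.{u} R :=
  ModuleCat.of R (CharacterModule C)

/-- `C` is Tor-∏-orthogonal: `Tor^R_i((C⁺)^I, C) = 0` for all `i ≥ 1` and all sets `I`. -/
def TorProdOrthogonal (C : ModuleCat.{u} R) : Prop :=
  ∀ (I : Type u) (i : ℕ), 1 ≤ i →
    Limits.IsZero (((Tor (ModuleCat.{u} R) i).obj
      (ModuleCat.of R (I → CharacterModule C))).obj C)

/-- A totally acyclic complex `⋯ → P₁ → P₀ → A₀ → A₁ → ⋯` with the `Pᵢ` projective,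
the `Aⱼ` in `Add_R(C)`, which stays exact after `Y ⊗_R -` for `Y ∈ Prod_R(C⁺)`. -/
structure PGCFComplex (C : ModuleCat.{u} R) where
  P : ℕ → ModuleCat.{u} R
  A : ℕ → ModuleCat.{u} R
  projP : ∀ n, Module.Projective R (P n)
  memA : ∀ n, AddClass C (A n)
  dP : ∀ n, P (n + 1) →ₗ[R] P n
  mid : P 0 →ₗ[R] A 0
  dA : ∀ n, A n →ₗ[R] A (n + 1)
  exact_P : ∀ n, Function.Exact (dP (n + 1)) (dP n)
  exact_mid : Function.Exact (dP 0) mid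
  exact_A0 : Function.Exact mid (dA 0)
  exact_A : ∀ n, Function.Exact (dA n) (dA (n + 1))
  tensor_exact : ∀ Y : ModuleCat.{u} R, ProdClass (charM C) Y →
    (∀ n, Function.Exact (LinearMap.lTensor Y (dP (n + 1))) (LinearMap.lTensor Y (dP n))) ∧
    Function.Exact (LinearMap.lTensor Y (dP 0)) (LinearMap.lTensor Y mid) ∧
    Function.Exact (LinearMap.lTensor Y mid) (LinearMap.lTensor Y (dA 0)) ∧
    ∀ n, Function.Exact (LinearMap.lTensor Y (dA n)) (LinearMap.lTensor Y (dA (n + 1)))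

/-- `M` is projectively coresolved `G_C`-flat. -/
def IsPGCF (C M : ModuleCat.{u} R) : Prop :=
  ∃ X : PGCFComplex C, Nonempty (M ≃ₗ[R] ↥(LinearMap.range X.mid))

namespace PGCFProof

open CategoryTheory.Abelian

/-- Vanishing of all higher `Ext(M, Y⁺)`, equivalently of all higher `Tor(Y, M)`. -/
def EV (Y M : ModuleCat.{u} R) : Prop :=
  ∀ n : ℕ, Subsingleton (Ext.{u} M (ModuleCat.of R (CharacterModule Y)) (n + 1))

lemma EV.of_projective (Y M : ModuleCat.{u} R) [Module.Projective R M] : EV Y M := by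
  intro n
  have : Projective M := (IsProjective.iff_projective (R := R) M).1 inferInstance
  exact Ext.subsingleton_of_projective _ _ _

lemma lTensor_inj_iff {Y A B : ModuleCat.{u} R} (f : A →ₗ[R] B) :
    Function.Injective (LinearMap.lTensor Y f) ↔
      ∀ φ : A →ₗ[R] CharacterModule Y, ∃ ψ : B →ₗ[R] CharacterModule Y, ψ ∘ₗ f = φ := by
  rw [LinearMap.lTensor_inj_iff_rTensor_inj, rTensor_injective_iff_lcomp_surjective]
  rfl

lemma ses_shortExact {A B D : ModuleCat.{u} R} {f : A →ₗ[R] B} {g : B →ₗ[R] D}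
    (h : IsSES f g) :
    (ShortComplex.mk (ModuleCat.ofHom f) (ModuleCat.ofHom g) (by
      ext x; exact h.2.1.apply_apply_eq_zero x)).ShortExact := by
  refine ShortComplex.ShortExact.mk' ?_ ?_ ?_
  · rw [ShortComplex.ShortExact.moduleCat_exact_iff_function_exact]
    exact h.2.1
  · exact (ModuleCat.mono_iff_injective _).2 h.1
  · exact (ModuleCat.epi_iff_surjective _).2 h.2.2

lemma EV.left {Y A B D : ModuleCat.{u} R} {f : A →ₗ[R] B} {g : B →ₗ[R] D}
    (h : IsSES f g) (hB : EV Y B) (hD : EV Y D) : EV Y A := by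
  intro n
  refine subsingleton_of_forall_eq 0 fun x => ?_
  have := hD (n + 1)
  have := hB n
  obtain ⟨y, hy⟩ := Ext.contravariant_sequence_exact₁ (ses_shortExact h) _ x
    (n₁ := n + 1 + 1) (by omega) (Subsingleton.elim _ _)
  rw [← hy, Subsingleton.elim y 0, Ext.comp_zero]

lemma EV.inj {Y A B D : ModuleCat.{u} R} {f : A →ₗ[R] B} {g : B →ₗ[R] D}
    (h : IsSES f g) (hD : EV Y D) : Function.Injective (LinearMap.lTensor Y f) := by
  rw [lTensor_inj_iff]
  intro φ
  have := hD 0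
  obtain ⟨y, hy⟩ := Ext.contravariant_sequence_exact₁ (ses_shortExact h)
    (ModuleCat.of R (CharacterModule Y)) (Ext.mk₀ (ModuleCat.ofHom φ))
    (n₁ := 0 + 1) (by omega) (Subsingleton.elim _ _)
  obtain ⟨ψ, rfl⟩ := Ext.homEquiv₀.symm.surjective y
  refine ⟨ψ.hom, ?_⟩
  rw [Ext.homEquiv₀_symm_apply, Ext.mk₀_comp_mk₀] at hy
  have := Ext.homEquiv₀.symm.injective hy
  exact congrArg ModuleCat.Hom.hom this

lemma EV.right {Y A B D : ModuleCat.{u} R} {f : A →ₗ[R] B} {g : B →ₗ[R] D}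
    (h : IsSES f g) (hB : EV Y B) {n : ℕ}
    (hA : ∀ m, m + 1 = n → Subsingleton (Ext.{u} A (ModuleCat.of R (CharacterModule Y)) (m + 1)))
    (hi : Function.Injective (LinearMap.lTensor Y f)) :
    Subsingleton (Ext.{u} D (ModuleCat.of R (CharacterModule Y)) (n + 1)) := by
  refine subsingleton_of_forall_eq 0 fun x => ?_
  have := hB n
  obtain ⟨y, rfl⟩ := Ext.contravariant_sequence_exact₃ (ses_shortExact h) _ x
    (Subsingleton.elim _ _) (n₀ := n) (by omega)
  cases n with
  | zero =>
    obtain ⟨φ, rfl⟩ := Ext.homEquiv₀.symm.surjective y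
    obtain ⟨ψ, hψ⟩ := (lTensor_inj_iff f).1 hi φ.hom
    have : φ = ModuleCat.ofHom f ≫ ModuleCat.ofHom ψ := by
      exact ModuleCat.hom_ext hψ.symm
    subst this
    rw [Ext.homEquiv₀_symm_apply, ← Ext.mk₀_comp_mk₀]
    exact (ses_shortExact h).extClass_comp_assoc _
  | succ m =>
    have := hA m rfl
    rw [Subsingleton.elim y 0, Ext.comp_zero]

lemma EV.right' {Y A B D : ModuleCat.{u} R} {f : A →ₗ[R] B} {g : B →ₗ[R] D}
    (h : IsSES f g) (hB : EV Y B) (hA : EV Y A)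
    (hi : Function.Injective (LinearMap.lTensor Y f)) : EV Y D :=
  fun _ => EV.right h hB (fun m _ => hA m) hi

lemma EV.retract_right {Y A B : ModuleCat.{u} R} (s : A →ₗ[R] B) (p : B →ₗ[R] A)
    (h : p ∘ₗ s = LinearMap.id) (hB : EV Y B) : EV Y A := by
  intro n
  refine subsingleton_of_forall_eq 0 fun x => ?_
  have := hB n
  have e : ModuleCat.ofHom s ≫ ModuleCat.ofHom p = 𝟙 A := by
    ext x; exact LinearMap.congr_fun h x
  have : (Ext.mk₀ (ModuleCat.ofHom s)).comp
      ((Ext.mk₀ (ModuleCat.ofHom p)).comp x (zero_add _)) (zero_add _) = x := by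
    rw [Ext.mk₀_comp_mk₀_assoc, e, Ext.mk₀_id_comp]
  rw [← this, Subsingleton.elim ((Ext.mk₀ (ModuleCat.ofHom p)).comp x (zero_add _)) 0,
    Ext.comp_zero]

lemma EV.retract_left {Y Z A : ModuleCat.{u} R} (s : Y →ₗ[R] Z) (p : Z →ₗ[R] Y)
    (h : p ∘ₗ s = LinearMap.id) (hB : EV Z A) : EV Y A := by
  intro n
  refine subsingleton_of_forall_eq 0 fun x => ?_
  have := hB n
  have e : ModuleCat.ofHom (CharacterModule.dual p) ≫ ModuleCat.ofHom (CharacterModule.dual s)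
      = 𝟙 (ModuleCat.of R (CharacterModule Y)) := by
    refine ModuleCat.hom_ext (LinearMap.ext fun x => ?_)
    change CharacterModule.dual s (CharacterModule.dual p x) = x
    ext y
    exact congrArg x (LinearMap.congr_fun h y)
  have : (x.comp (Ext.mk₀ (ModuleCat.ofHom (CharacterModule.dual p))) (add_zero _)).comp
      (Ext.mk₀ (ModuleCat.ofHom (CharacterModule.dual s))) (add_zero _) = x := by
    rw [Ext.comp_assoc_of_third_deg_zero, Ext.mk₀_comp_mk₀, e, Ext.comp_mk₀_id]
  rw [← this, Subsingleton.elim (x.comp (Ext.mk₀ (ModuleCat.ofHom (CharacterModule.dual p))) _) 0,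
    Ext.zero_comp]

/-- A projective resolution. -/
structure Res (M : ModuleCat.{u} R) where
  P : ℕ → ModuleCat.{u} R
  proj : ∀ n, Module.Projective R (P n)
  dP : ∀ n, P (n + 1) →ₗ[R] P n
  ε : P 0 →ₗ[R] M
  surj : Function.Surjective ε
  exact0 : Function.Exact (dP 0) ε
  exact : ∀ n, Function.Exact (dP (n + 1)) (dP n)

/-- The resolution stays exact after tensoring. -/
def Res.TE {M : ModuleCat.{u} R} (r : Res M) (Y : ModuleCat.{u} R) : Prop :=
  ∀ n, Function.Exact (LinearMap.lTensor Y (r.dP (n + 1))) (LinearMap.lTensor Y (r.dP n))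

/-- The induced resolution of the first syzygy. -/
def Res.shift {M : ModuleCat.{u} R} (r : Res M) : Res (ModuleCat.of R (LinearMap.ker r.ε)) where
  P n := r.P (n + 1)
  proj n := r.proj (n + 1)
  dP n := r.dP (n + 1)
  ε := (r.dP 0).codRestrict (LinearMap.ker r.ε) (fun x => r.exact0.apply_apply_eq_zero x)
  surj := by
    rintro ⟨x, hx⟩
    obtain ⟨y, rfl⟩ := (r.exact0 x).1 hx
    exact ⟨y, rfl⟩
  exact0 := by
    intro x
    rw [← r.exact 0 x]
    exact Subtype.ext_iff
  exact n := r.exact (n + 1)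

lemma Res.ses {M : ModuleCat.{u} R} (r : Res M) :
    IsSES (A := ModuleCat.of R (LinearMap.ker r.ε)) (LinearMap.ker r.ε).subtype r.ε :=
  ⟨Subtype.val_injective, LinearMap.exact_subtype_ker_map _, r.surj⟩

lemma tensor_inj_of_exact {Y X₁ X₂ X₃ Z : ModuleCat.{u} R} (a : X₁ →ₗ[R] X₂) (b : X₂ →ₗ[R] X₃)
    (g : X₂ →ₗ[R] Z) (i : Z →ₗ[R] X₃) (hig : i ∘ₗ g = b) (hg : Function.Surjective g)
    (hag : Function.Exact a g)
    (hT : Function.Exact (LinearMap.lTensor Y a) (LinearMap.lTensor Y b)) :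
    Function.Injective (LinearMap.lTensor Y i) := by
  rw [injective_iff_map_eq_zero]
  intro z hz
  obtain ⟨x, rfl⟩ := LinearMap.lTensor_surjective Y hg z
  rw [← LinearMap.comp_apply, ← LinearMap.lTensor_comp, hig] at hz
  obtain ⟨w, rfl⟩ := (hT x).1 hz
  exact (lTensor_exact Y hag hg).apply_apply_eq_zero w

/-- Exactness of a composite with an injection. -/
lemma exact_comp_inj {Y X₁ X₂ X₃ Z : ModuleCat.{u} R} (a : X₁ →ₗ[R] X₂)
    (g : X₂ →ₗ[R] Z) (i : Z →ₗ[R] X₃) (hg : Function.Surjective g)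
    (hag : Function.Exact a g) (hi : Function.Injective (LinearMap.lTensor Y i)) :
    Function.Exact (LinearMap.lTensor Y a) (LinearMap.lTensor Y (i ∘ₗ g)) := by
  rw [LinearMap.lTensor_comp]
  intro x
  rw [← lTensor_exact Y hag hg x, LinearMap.comp_apply]
  exact map_eq_zero_iff _ hi

/-- Exactness precomposed with a surjection. -/
lemma exact_comp_surj {Y X₁ X₂ X₃ Z : ModuleCat.{u} R} (g : X₁ →ₗ[R] Z) (i : Z →ₗ[R] X₂)
    (b : X₂ →ₗ[R] X₃) (hg : Function.Surjective g)
    (h : Function.Exact (LinearMap.lTensor Y i) (LinearMap.lTensor Y b)) :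
    Function.Exact (LinearMap.lTensor Y (i ∘ₗ g)) (LinearMap.lTensor Y b) := by
  rw [LinearMap.lTensor_comp]
  intro x
  rw [h x]
  constructor
  · rintro ⟨y, rfl⟩
    obtain ⟨z, rfl⟩ := LinearMap.lTensor_surjective Y hg y
    exact ⟨z, rfl⟩
  · rintro ⟨y, rfl⟩
    exact ⟨_, rfl⟩

lemma Res.ev {Y M : ModuleCat.{u} R} (r : Res M) (h : r.TE Y) : EV Y M := by
  intro n
  induction n generalizing M with
  | zero =>
    have := r.proj 0
    refine EV.right r.ses (EV.of_projective Y _) (fun m hm => by omega) ?_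
    exact tensor_inj_of_exact (r.dP 1) (r.dP 0) r.shift.ε _ rfl r.shift.surj r.shift.exact0 (h 0)
  | succ n ih =>
    have := r.proj 0
    refine EV.right r.ses (EV.of_projective Y _) (fun m hm => ?_) ?_
    · obtain rfl : m = n := by omega
      exact ih r.shift (fun n => h (n + 1))
    exact tensor_inj_of_exact (r.dP 1) (r.dP 0) r.shift.ε _ rfl r.shift.surj r.shift.exact0 (h 0)

lemma Res.te {Y M : ModuleCat.{u} R} (r : Res M) (h : EV Y M) : r.TE Y := by
  intro n
  have := r.proj 0
  induction n generalizing M with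
  | zero =>
    exact exact_comp_inj (r.dP 1) r.shift.ε (LinearMap.ker r.ε).subtype r.shift.surj
      r.shift.exact0 (EV.inj r.ses h)
  | succ n ih =>
    exact ih r.shift (EV.left r.ses (EV.of_projective Y _) h) (r.proj 1)

/-- Elementary form of a Mathlib resolution. -/
noncomputable def Res.ofPR {M : ModuleCat.{u} R} (Q : ProjectiveResolution M) : Res M where
  P n := Q.complex.X n
  proj n := (IsProjective.iff_projective (R := R) _).2 (Q.projective n)
  dP n := (Q.complex.d (n + 1) n).hom
  ε := (Q.π.f 0).hom
  surj := (ModuleCat.epi_iff_surjective (Q.π.f 0)).1 inferInstance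
  exact0 := (ShortComplex.ShortExact.moduleCat_exact_iff_function_exact _).1
    (ShortComplex.exact_of_g_is_cokernel
      (ShortComplex.mk _ _ Q.complex_d_comp_π_f_zero) Q.isColimitCokernelCofork)
  exact n := (ShortComplex.ShortExact.moduleCat_exact_iff_function_exact _).1 (Q.exact_succ n)

lemma Res.nonempty (M : ModuleCat.{u} R) : Nonempty (Res M) :=
  ⟨Res.ofPR (ProjectiveResolution.of M)⟩

lemma Res.ofPR_te {M Y : ModuleCat.{u} R} (Q : ProjectiveResolution M)
    (h : ∀ i : ℕ, 1 ≤ i → Limits.IsZero (((Tor (ModuleCat.{u} R) i).obj Y).obj M)) :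
    (Res.ofPR Q).TE Y := by
  intro n
  have h1 := (h (n + 1) (by omega)).of_iso
    (Q.isoLeftDerivedObj ((MonoidalCategory.tensoringLeft (ModuleCat.{u} R)).obj Y) (n + 1)).symm
  have h2 := (HomologicalComplex.exactAt_iff_isZero_homology _ _).2 h1
  rw [HomologicalComplex.exactAt_iff' _ (n + 2) (n + 1) n (by simp) (by simp)] at h2
  exact (ShortComplex.ShortExact.moduleCat_exact_iff_function_exact _).1 h2

lemma finsupp_exact {A B D : Type*} [AddCommGroup A] [AddCommGroup B] [AddCommGroup D]
    [Module R A] [Module R B] [Module R D] (ι : Type*) {f : A →ₗ[R] B} {g : B →ₗ[R] D}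
    (h : Function.Exact f g) :
    Function.Exact (Finsupp.mapRange.linearMap (α := ι) f)
      (Finsupp.mapRange.linearMap (α := ι) g) := by
  intro x
  have h1 : x ∈ Set.range (Finsupp.mapRange.linearMap (α := ι) f) ↔
      x ∈ Set.range (Finsupp.mapRange (α := ι) f (map_zero f)) := Iff.rfl
  rw [h1, Finsupp.range_mapRange]
  change _ ↔ ∀ i, x i ∈ Set.range f
  rw [Finsupp.ext_iff]
  exact forall_congr' fun i => h (x i)

/-- Direct sum of copies of a resolution. -/
noncomputable def Res.finsupp {M : ModuleCat.{u} R} (r : Res M) (ι : Type u) :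
    Res (ModuleCat.of R (ι →₀ M)) where
  P n := ModuleCat.of R (ι →₀ r.P n)
  proj n := by
    classical
    have := r.proj n
    exact Module.Projective.of_equiv (finsuppLEquivDirectSum R (r.P n) ι).symm
  dP n := Finsupp.mapRange.linearMap (r.dP n)
  ε := Finsupp.mapRange.linearMap r.ε
  surj := Finsupp.mapRange_surjective _ (map_zero _) r.surj
  exact0 := finsupp_exact ι r.exact0
  exact n := finsupp_exact ι (r.exact n)

lemma lTensor_finsupp {Y A B : Type*} [AddCommGroup Y] [AddCommGroup A] [AddCommGroup B]
    [Module R Y] [Module R A] [Module R B] (ι : Type*) (f : A →ₗ[R] B) [DecidableEq ι] :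
    (TensorProduct.finsuppRight R R Y B ι).toLinearMap ∘ₗ
        LinearMap.lTensor Y (Finsupp.mapRange.linearMap (α := ι) f) =
      Finsupp.mapRange.linearMap (α := ι) (LinearMap.lTensor Y f) ∘ₗ
        (TensorProduct.finsuppRight R R Y A ι).toLinearMap := by
  refine TensorProduct.ext' fun y a => ?_
  ext i
  simp

lemma Res.finsupp_te {Y M : ModuleCat.{u} R} (r : Res M) (ι : Type u) (h : r.TE Y) :
    (r.finsupp ι).TE Y := by
  classical
  intro n
  exact (Function.Exact.iff_of_ladder_linearEquiv
    (e₁ := TensorProduct.finsuppRight R R Y (r.P (n + 1 + 1)) ι)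
    (e₂ := TensorProduct.finsuppRight R R Y (r.P (n + 1)) ι)
    (e₃ := TensorProduct.finsuppRight R R Y (r.P n) ι)
    (lTensor_finsupp ι (r.dP (n + 1))).symm (lTensor_finsupp ι (r.dP n)).symm).1
      (finsupp_exact ι (h n))

lemma ev_add {C Y A : ModuleCat.{u} R} (hC : TorProdOrthogonal C) (hY : ProdClass (charM C) Y)
    (hA : AddClass C A) : EV Y A := by
  obtain ⟨I, s, p, hsp⟩ := hY
  obtain ⟨J, s₂, p₂, hsp₂⟩ := hA
  have h1 : (Res.ofPR (ProjectiveResolution.of C)).TE (ModuleCat.of R (I → CharacterModule C)) :=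
    Res.ofPR_te _ (hC I)
  have h2 := ((Res.ofPR (ProjectiveResolution.of C)).finsupp J).ev (Res.finsupp_te _ J h1)
  have h3 : EV Y (ModuleCat.of R (J →₀ C)) :=
    EV.retract_left (Z := ModuleCat.of R (I → CharacterModule C)) s p hsp h2
  exact EV.retract_right (B := ModuleCat.of R (J →₀ C)) s₂ p₂ hsp₂ h3

/-- An `Add(C)`-coresolution, tensor-exact with respect to `Prod(C⁺)`. -/
structure Cores (C M : ModuleCat.{u} R) where
  A : ℕ → ModuleCat.{u} R
  memA : ∀ n, AddClass C (A n)
  η : M →ₗ[R] A 0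
  dA : ∀ n, A n →ₗ[R] A (n + 1)
  inj : Function.Injective η
  exact0 : Function.Exact η (dA 0)
  exact : ∀ n, Function.Exact (dA n) (dA (n + 1))
  tinj : ∀ Y : ModuleCat.{u} R, ProdClass (charM C) Y → Function.Injective (LinearMap.lTensor Y η)
  texact0 : ∀ Y : ModuleCat.{u} R, ProdClass (charM C) Y →
    Function.Exact (LinearMap.lTensor Y η) (LinearMap.lTensor Y (dA 0))
  texact : ∀ Y : ModuleCat.{u} R, ProdClass (charM C) Y → ∀ n,
    Function.Exact (LinearMap.lTensor Y (dA n)) (LinearMap.lTensor Y (dA (n + 1)))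

lemma isPGCF_of_cores {C M : ModuleCat.{u} R} (k : Cores C M)
    (hE : ∀ Y : ModuleCat.{u} R, ProdClass (charM C) Y → EV Y M) : IsPGCF C M := by
  obtain ⟨r⟩ := Res.nonempty M
  refine ⟨{ P := r.P, A := k.A, projP := r.proj, memA := k.memA, dP := r.dP,
            mid := k.η ∘ₗ r.ε, dA := k.dA, exact_P := r.exact, exact_mid := ?_, exact_A0 := ?_,
            exact_A := k.exact, tensor_exact := fun Y hY => ⟨r.te (hE Y hY), ?_, ?_, k.texact Y hY⟩
          }, ⟨?_⟩⟩
  · intro x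
    rw [← r.exact0 x, LinearMap.comp_apply]
    exact map_eq_zero_iff _ k.inj
  · intro x
    rw [k.exact0 x]
    constructor
    · rintro ⟨y, rfl⟩
      obtain ⟨z, rfl⟩ := r.surj y
      exact ⟨z, rfl⟩
    · rintro ⟨y, rfl⟩
      exact ⟨_, rfl⟩
  · exact exact_comp_inj _ _ _ r.surj r.exact0 (k.tinj Y hY)
  · exact exact_comp_surj _ _ _ r.surj (k.texact0 Y hY)
  · refine (LinearEquiv.ofInjective k.η k.inj).trans (LinearEquiv.ofEq _ _ ?_)
    rw [LinearMap.range_comp, LinearMap.range_eq_top.2 r.surj, Submodule.map_top]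

lemma cores_of_isPGCF {C M : ModuleCat.{u} R} (h : IsPGCF C M) :
    Nonempty (Cores C M) ∧ ∀ Y : ModuleCat.{u} R, ProdClass (charM C) Y → EV Y M := by
  obtain ⟨X, ⟨e⟩⟩ := h
  let ε : X.P 0 →ₗ[R] M := e.symm.toLinearMap ∘ₗ X.mid.rangeRestrict
  let η : M →ₗ[R] X.A 0 := (LinearMap.range X.mid).subtype ∘ₗ e.toLinearMap
  have hηε : η ∘ₗ ε = X.mid := by
    ext x; simp [η, ε]
  have hη : Function.Injective η := Subtype.val_injective.comp e.injective
  have hε : Function.Surjective ε :=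
    e.symm.surjective.comp (LinearMap.surjective_rangeRestrict _)
  have hex : Function.Exact (X.dP 0) ε := by
    intro x
    rw [← X.exact_mid x, ← hηε, LinearMap.comp_apply]
    exact (map_eq_zero_iff _ hη).symm
  refine ⟨⟨{ A := X.A, memA := X.memA, η := η, dA := X.dA, inj := hη, exact0 := ?_,
             exact := X.exact_A, tinj := ?_, texact0 := ?_,
             texact := fun Y hY => (X.tensor_exact Y hY).2.2.2 }⟩, ?_⟩
  · intro x
    rw [X.exact_A0 x, ← hηε]
    constructor
    · rintro ⟨y, rfl⟩
      exact ⟨_, rfl⟩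
    · rintro ⟨y, rfl⟩
      obtain ⟨z, rfl⟩ := hε y
      exact ⟨z, rfl⟩
  · intro Y hY
    exact tensor_inj_of_exact _ _ ε η hηε hε hex (X.tensor_exact Y hY).2.1
  · intro Y hY x
    rw [(X.tensor_exact Y hY).2.2.1 x, ← hηε, LinearMap.lTensor_comp]
    constructor
    · rintro ⟨y, rfl⟩
      exact ⟨_, rfl⟩
    · rintro ⟨y, rfl⟩
      obtain ⟨z, rfl⟩ := LinearMap.lTensor_surjective Y hε y
      exact ⟨z, rfl⟩
  · intro Y hY
    let r : Res M := ⟨X.P, X.projP, X.dP, ε, hε, hex, X.exact_P⟩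
    exact r.ev (X.tensor_exact Y hY).1

/-- Splice a coresolution with a short exact sequence. -/
noncomputable def Cores.splice {C M A G : ModuleCat.{u} R} (k : Cores C G) (hA : AddClass C A)
    {f : M →ₗ[R] A} {g : A →ₗ[R] G} (h : IsSES f g)
    (hf : ∀ Y : ModuleCat.{u} R, ProdClass (charM C) Y →
      Function.Injective (LinearMap.lTensor Y f)) : Cores C M where
  A n := Nat.casesOn n A k.A
  memA n := by
    cases n with
    | zero => exact hA
    | succ n => exact k.memA n
  η := f
  dA n := match n with
    | 0 => k.η ∘ₗ g
    | n + 1 => k.dA n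
  inj := h.1
  exact0 := by
    intro x
    rw [← h.2.1 x]
    exact map_eq_zero_iff _ k.inj
  exact n := by
    cases n with
    | zero =>
      intro x
      refine (k.exact0 x).trans ⟨?_, ?_⟩
      · rintro ⟨y, rfl⟩
        obtain ⟨z, rfl⟩ := h.2.2 y
        exact ⟨z, rfl⟩
      · rintro ⟨y, rfl⟩
        exact ⟨g y, rfl⟩
    | succ n => exact k.exact n
  tinj := hf
  texact0 Y hY := exact_comp_inj f g k.η h.2.2 h.2.1 (k.tinj Y hY)
  texact Y hY n := by
    cases n with
    | zero => exact exact_comp_surj g k.η (k.dA 0) h.2.2 (k.texact0 Y hY)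
    | succ n => exact k.texact Y hY n

/-- The coresolution of the first cosyzygy. -/
noncomputable def Cores.shift {C M : ModuleCat.{u} R} (k : Cores C M) :
    Cores C (ModuleCat.of R (LinearMap.range (k.dA 0))) where
  A n := k.A (n + 1)
  memA n := k.memA (n + 1)
  η := (LinearMap.range (k.dA 0)).subtype
  dA n := k.dA (n + 1)
  inj := Subtype.val_injective
  exact0 := by
    intro x
    refine (k.exact 0 x).trans ⟨?_, ?_⟩
    · rintro ⟨y, rfl⟩
      exact ⟨⟨_, y, rfl⟩, rfl⟩
    · rintro ⟨⟨_, y, rfl⟩, rfl⟩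
      exact ⟨y, rfl⟩
  exact n := k.exact (n + 1)
  tinj Y hY := by
    refine tensor_inj_of_exact k.η (k.dA 0) (k.dA 0).rangeRestrict _ rfl
      (LinearMap.surjective_rangeRestrict _) ?_ (k.texact0 Y hY)
    intro x
    rw [← k.exact0 x]
    exact Subtype.ext_iff
  texact0 Y hY := by
    intro x
    have h : (LinearMap.range (k.dA 0)).subtype ∘ₗ (k.dA 0).rangeRestrict = k.dA 0 := rfl
    rw [k.texact Y hY 0 x]
    constructor
    · rintro ⟨y, rfl⟩
      refine ⟨LinearMap.lTensor Y (k.dA 0).rangeRestrict y, ?_⟩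
      rw [← LinearMap.comp_apply, ← LinearMap.lTensor_comp, h]
    · rintro ⟨y, rfl⟩
      obtain ⟨z, rfl⟩ := LinearMap.lTensor_surjective Y
        (LinearMap.surjective_rangeRestrict (k.dA 0)) y
      refine ⟨z, ?_⟩
      rw [← LinearMap.comp_apply, ← LinearMap.lTensor_comp, h]
  texact Y hY n := k.texact Y hY (n + 1)

lemma Cores.ses {C M : ModuleCat.{u} R} (k : Cores C M) :
    IsSES (C := ModuleCat.of R (LinearMap.range (k.dA 0))) k.η (k.dA 0).rangeRestrict := by
  refine ⟨k.inj, ?_, LinearMap.surjective_rangeRestrict _⟩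
  intro x
  rw [← k.exact0 x]
  exact Subtype.ext_iff

end PGCFProof

/-- If `C` is Tor-∏-orthogonal then `PG_CF(R)` is right `Add_R(C)`-periodic:
`M ∈ PG_CF(R)` iff there is a short exact sequence `0 → M → A → G → 0` with `A ∈ Add_R(C)`
and `G ∈ PG_CF(R)`. -/
theorem statement9 (C : ModuleCat.{u} R) (hC : TorProdOrthogonal C) (M : ModuleCat.{u} R) :
    IsPGCF C M ↔ ∃ (A G : ModuleCat.{u} R) (f : M →ₗ[R] A) (g : A →ₗ[R] G),
      AddClass C A ∧ IsPGCF C G ∧ IsSES f g := by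
  constructor
  · intro h
    obtain ⟨⟨k⟩, hE⟩ := PGCFProof.cores_of_isPGCF h
    refine ⟨k.A 0, ModuleCat.of R (LinearMap.range (k.dA 0)), k.η, (k.dA 0).rangeRestrict,
      k.memA 0, PGCFProof.isPGCF_of_cores k.shift fun Y hY => ?_, k.ses⟩
    exact PGCFProof.EV.right' k.ses (PGCFProof.ev_add hC hY (k.memA 0)) (hE Y hY) (k.tinj Y hY)
  · rintro ⟨A, G, f, g, hA, hG, h⟩
    obtain ⟨⟨k⟩, hE⟩ := PGCFProof.cores_of_isPGCF hG
    exact PGCFProof.isPGCF_of_cores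
      (k.splice hA h fun Y hY => PGCFProof.EV.inj h (hE Y hY))
      fun Y hY => PGCFProof.EV.left h (PGCFProof.ev_add hC hY hA) (hE Y hY)
end

section
/- Let M be a projectively coresolved G_C-flat left R-module. Then M is a direct summand of a module N for which there exists a (Prod_R(C⁺) ⊗_R -)-exact short exact sequence 0 → N → P ⊕ X → N → 0 with P projective and X ∈ Add_R(C). -/
open CategoryTheory CategoryTheory.Limits

set_option autoImplicit false

universe u

variable {R : Type u} [CommRing R]

open TensorProduct DirectSum

/-- The shift permutation of the index set `ℕ ⊕ ℕ ≅ ℤ`. -/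
def nxt : ℕ ⊕ ℕ → ℕ ⊕ ℕ
  | Sum.inl 0 => Sum.inr 0
  | Sum.inl (n + 1) => Sum.inl n
  | Sum.inr n => Sum.inr (n + 1)

lemma nxt_inj : Function.Injective nxt := by
  rintro ((_ | n) | n) ((_ | m) | m) h <;> simp_all [nxt]

lemma nxt_surj : Function.Surjective nxt := by
  rintro (n | (_ | n))
  · exact ⟨Sum.inl (n + 1), rfl⟩
  · exact ⟨Sum.inl 0, rfl⟩
  · exact ⟨Sum.inr n, rfl⟩

section general

variable (E : ℕ ⊕ ℕ → Type u) [∀ i, AddCommGroup (E i)] [∀ i, Module R (E i)]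
  (d : ∀ i, E i →ₗ[R] E (nxt i))

/-- The total differential on the direct sum. -/
noncomputable def totD : (⨁ i, E i) →ₗ[R] (⨁ i, E i) :=
  DirectSum.toModule R _ _ (fun i => DirectSum.lof R _ E (nxt i) ∘ₗ d i)

lemma totD_lof (i : ℕ ⊕ ℕ) (x : E i) :
    totD E d (DirectSum.lof R _ E i x) = DirectSum.lof R _ E (nxt i) (d i x) := by
  simp [totD, DirectSum.toModule_lof]

lemma totD_apply (y : ⨁ i, E i) (i : ℕ ⊕ ℕ) : totD E d y (nxt i) = d i (y i) := by
  suffices h : DirectSum.component R _ E (nxt i) ∘ₗ totD E d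
      = d i ∘ₗ DirectSum.component R _ E i from LinearMap.congr_fun h y
  refine DirectSum.linearMap_ext R fun j => LinearMap.ext fun x => ?_
  simp only [LinearMap.comp_apply, totD_lof]
  by_cases h : j = i
  · subst h
    rw [DirectSum.component.lof_self, DirectSum.component.lof_self]
  · have h' : nxt j ≠ nxt i := fun e => h (nxt_inj e)
    rw [DirectSum.component.of, DirectSum.component.of, dif_neg h, dif_neg h', map_zero]

lemma totD_exact (hd : ∀ i, Function.Exact (d i) (d (nxt i))) :
    Function.Exact (totD E d) (totD E d) := by
  classical
  intro y
  constructor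
  · intro hy
    change y ∈ LinearMap.range (totD E d)
    rw [← DirectSum.sum_support_of y]
    refine Submodule.sum_mem _ fun j _ => ?_
    obtain ⟨k, rfl⟩ := nxt_surj j
    have h : d (nxt k) (y (nxt k)) = 0 := by
      rw [← totD_apply, hy]; rfl
    obtain ⟨x, hx⟩ := (hd k _).1 h
    rw [← hx]
    exact ⟨DirectSum.lof R _ E k x, totD_lof E d k x⟩
  · rintro ⟨x, rfl⟩
    refine DFinsupp.ext fun j => ?_
    obtain ⟨k, rfl⟩ := nxt_surj j
    obtain ⟨k, rfl⟩ := nxt_surj k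
    refine (totD_apply E d _ _).trans ?_
    rw [totD_apply]
    exact (hd k).apply_apply_eq_zero _

lemma totD_tensor_exact (Y : Type u) [AddCommGroup Y] [Module R Y]
    (hd : ∀ i, Function.Exact ((d i).lTensor Y) ((d (nxt i)).lTensor Y)) :
    Function.Exact ((totD E d).lTensor Y) ((totD E d).lTensor Y) := by
  have key := totD_exact (fun i => Y ⊗[R] E i) (fun i => (d i).lTensor Y) hd
  let e := TensorProduct.directSumRight R R Y E
  have comm : totD (fun i => Y ⊗[R] E i) (fun i => (d i).lTensor Y) ∘ₗ e.toLinearMap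
      = e.toLinearMap ∘ₗ (totD E d).lTensor Y := by
    refine TensorProduct.ext ?_
    refine LinearMap.ext fun y => DirectSum.linearMap_ext R fun j => LinearMap.ext fun x => ?_
    simp [e, totD_lof, TensorProduct.directSumRight_tmul_lof]
  exact (Function.Exact.iff_of_ladder_linearEquiv (e₁ := e) (e₂ := e) (e₃ := e) comm comm).1 key

end general

/-- From the self-exact endomorphism to the short exact sequence. -/
lemma ses_tensor {T T' : Type u} [AddCommGroup T] [Module R T] [AddCommGroup T'] [Module R T']
    (D : T →ₗ[R] T) (e : T ≃ₗ[R] T')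
    (f : LinearMap.ker D →ₗ[R] T') (g : T' →ₗ[R] LinearMap.ker D)
    (hf : f = e.toLinearMap ∘ₗ (LinearMap.ker D).subtype)
    (hg : (LinearMap.ker D).subtype ∘ₗ g ∘ₗ e.toLinearMap = D)
    (hfg : Function.Exact f g) (gs : Function.Surjective g)
    (Y : Type u) [AddCommGroup Y] [Module R Y]
    (hY : Function.Exact (D.lTensor Y) (D.lTensor Y)) :
    Function.Injective (f.lTensor Y) ∧ Function.Exact (f.lTensor Y) (g.lTensor Y) ∧
      Function.Surjective (g.lTensor Y) := by
  have hs := LinearMap.lTensor_surjective Y gs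
  refine ⟨?_, lTensor_exact Y hfg gs, hs⟩
  have hge : Function.Surjective (g ∘ₗ e.toLinearMap) := gs.comp e.surjective
  have hs' := LinearMap.lTensor_surjective Y hge
  have hD : D.lTensor Y = (LinearMap.ker D).subtype.lTensor Y ∘ₗ (g ∘ₗ e.toLinearMap).lTensor Y := by
    rw [← LinearMap.lTensor_comp, hg]
  have h0 : (g ∘ₗ e.toLinearMap) ∘ₗ D = 0 := by
    have : (g ∘ₗ e.toLinearMap) ∘ₗ D = (g ∘ₗ f) ∘ₗ (g ∘ₗ e.toLinearMap) := by
      rw [hf]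
      exact (congrArg (fun q => (g ∘ₗ e.toLinearMap) ∘ₗ q) hg).symm
    rw [this, hfg.linearMap_comp_eq_zero, LinearMap.zero_comp]
  rw [injective_iff_map_eq_zero]
  intro z hz
  have hz' : (LinearMap.ker D).subtype.lTensor Y z = 0 := by
    have : e.toLinearMap.lTensor Y ((LinearMap.ker D).subtype.lTensor Y z) = 0 := by
      rw [← LinearMap.comp_apply, ← LinearMap.lTensor_comp, ← hf, hz]
    exact (LinearEquiv.lTensor Y e).map_eq_zero_iff.1 this
  obtain ⟨t, rfl⟩ := hs' z
  have ht : D.lTensor Y t = 0 := by rw [hD]; exact hz'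
  obtain ⟨t', rfl⟩ := (hY t).1 ht
  rw [← LinearMap.comp_apply, ← LinearMap.lTensor_comp, h0]
  simp

lemma addClass_directSum (C : ModuleCat.{u} R) (A : ℕ → ModuleCat.{u} R)
    (h : ∀ n, AddClass C (A n)) : AddClass C (ModuleCat.of R (⨁ n, A n)) := by
  choose ι s p hsp using h
  let s' : (⨁ n, A n) →ₗ[R] ((Σ n, ι n) →₀ C) :=
    DirectSum.toModule R _ _ fun n => Finsupp.lmapDomain C R (Sigma.mk n) ∘ₗ s n
  let p' : ((Σ n, ι n) →₀ C) →ₗ[R] (⨁ n, A n) :=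
    Finsupp.lsum R fun i => DirectSum.lof R _ (fun n => A n) i.1 ∘ₗ p i.1 ∘ₗ Finsupp.lsingle i.2
  have hp : ∀ n, p' ∘ₗ Finsupp.lmapDomain C R (Sigma.mk n)
      = DirectSum.lof R _ (fun n => A n) n ∘ₗ p n := by
    intro n
    refine Finsupp.lhom_ext fun i c => ?_
    simp [p', Finsupp.mapDomain_single]
  refine ⟨Σ n, ι n, s', p', ?_⟩
  refine DirectSum.linearMap_ext R fun n => LinearMap.ext fun x => ?_
  have h1 := LinearMap.congr_fun (hp n) (s n x)
  have h2 := LinearMap.congr_fun (hsp n) x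
  simp only [LinearMap.comp_apply, LinearMap.id_apply] at h1 h2 ⊢
  rw [h2] at h1
  have h3 : s' (DirectSum.lof R _ (fun n => A n) n x)
      = Finsupp.lmapDomain C R (Sigma.mk n) (s n x) := by
    simp only [s', DirectSum.toModule_lof, LinearMap.comp_apply]
  exact (congrArg p' h3).trans h1

/-- Splitting the direct sum over `ℕ ⊕ ℕ`. -/
noncomputable def sumSplit (E : ℕ ⊕ ℕ → Type u) [∀ i, AddCommGroup (E i)] [∀ i, Module R (E i)] :
    (⨁ i, E i) ≃ₗ[R] ((⨁ n, E (Sum.inl n)) × (⨁ n, E (Sum.inr n))) :=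
  LinearEquiv.ofLinearMap
    (DirectSum.toModule R _ _ fun i => match i with
      | Sum.inl n => LinearMap.inl R _ _ ∘ₗ DirectSum.lof R _ (fun n => E (Sum.inl n)) n
      | Sum.inr n => LinearMap.inr R _ _ ∘ₗ DirectSum.lof R _ (fun n => E (Sum.inr n)) n)
    (LinearMap.coprod
      (DirectSum.toModule R _ _ fun n => DirectSum.lof R _ E (Sum.inl n))
      (DirectSum.toModule R _ _ fun n => DirectSum.lof R _ E (Sum.inr n)))
    (by
      refine LinearMap.prod_ext ?_ ?_ <;>
      · refine DirectSum.linearMap_ext R fun n => LinearMap.ext fun x => ?_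
        simp [DirectSum.toModule_lof])
    (by
      refine DirectSum.linearMap_ext R fun i => LinearMap.ext fun x => ?_
      rcases i with n | n <;> simp [DirectSum.toModule_lof])

/-- The terms of the complex. -/
def PGCFComplex.E {C : ModuleCat.{u} R} (X : PGCFComplex C) : ℕ ⊕ ℕ → ModuleCat.{u} R
  | Sum.inl n => X.P n
  | Sum.inr n => X.A n

/-- The differentials of the complex. -/
def PGCFComplex.d {C : ModuleCat.{u} R} (X : PGCFComplex C) : ∀ i, X.E i →ₗ[R] X.E (nxt i)
  | Sum.inl 0 => X.mid
  | Sum.inl (n + 1) => X.dP n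
  | Sum.inr n => X.dA n

lemma PGCFComplex.d_exact {C : ModuleCat.{u} R} (X : PGCFComplex C) :
    ∀ i, Function.Exact (X.d i) (X.d (nxt i))
  | Sum.inl 0 => X.exact_A0
  | Sum.inl 1 => X.exact_mid
  | Sum.inl (n + 2) => X.exact_P n
  | Sum.inr n => X.exact_A n

lemma PGCFComplex.d_tensor_exact {C : ModuleCat.{u} R} (X : PGCFComplex C)
    (Y : ModuleCat.{u} R) (hY : ProdClass (charM C) Y) :
    ∀ i, Function.Exact ((X.d i).lTensor Y) ((X.d (nxt i)).lTensor Y)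
  | Sum.inl 0 => (X.tensor_exact Y hY).2.2.1
  | Sum.inl 1 => (X.tensor_exact Y hY).2.1
  | Sum.inl (n + 2) => (X.tensor_exact Y hY).1 n
  | Sum.inr n => (X.tensor_exact Y hY).2.2.2 n

/-- Every `PG_CF` module `M` is a direct summand of a module `N` fitting in
a `(Prod_R(C⁺) ⊗_R -)`-exact short exact sequence `0 → N → P ⊕ X → N → 0` with `P`
projective and `X ∈ Add_R(C)`. -/
theorem statement11 (C M : ModuleCat.{u} R) (hM : IsPGCF C M) :
    ∃ (N : ModuleCat.{u} R) (s : M →ₗ[R] N) (p : N →ₗ[R] M),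
      p ∘ₗ s = LinearMap.id ∧
      ∃ (P X : ModuleCat.{u} R)
        (f : N →ₗ[R] ModuleCat.of R (P × X)) (g : ModuleCat.of R (P × X) →ₗ[R] N),
        Module.Projective R P ∧ AddClass C X ∧
        IsSES (B := ModuleCat.of R (P × X)) f g ∧
        ∀ Y : ModuleCat.{u} R, ProdClass (charM C) Y →
          Function.Injective (LinearMap.lTensor Y f) ∧
          Function.Exact (LinearMap.lTensor Y f) (LinearMap.lTensor Y g) ∧
          Function.Surjective (LinearMap.lTensor Y g) := by
  obtain ⟨X, ⟨φ⟩⟩ := hM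
  let E : ℕ ⊕ ℕ → Type u := fun i => X.E i
  let D : (⨁ i, E i) →ₗ[R] (⨁ i, E i) := totD E X.d
  have hD : Function.Exact D D := totD_exact E X.d X.d_exact
  let N := LinearMap.ker D
  let e := sumSplit (R := R) E
  let s₀ : LinearMap.range X.mid →ₗ[R] N :=
    LinearMap.codRestrict N
      (DirectSum.lof R _ E (Sum.inr 0) ∘ₗ (LinearMap.range X.mid).subtype) (by
        rintro ⟨_, x, rfl⟩
        change D _ = 0
        refine (totD_lof E X.d (Sum.inr 0) (X.mid x)).trans ?_
        have : X.d (Sum.inr 0) (X.mid x) = 0 := X.exact_A0.apply_apply_eq_zero x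
        rw [this, map_zero])
  let p₀ : N →ₗ[R] LinearMap.range X.mid :=
    LinearMap.codRestrict (LinearMap.range X.mid)
      (DirectSum.component R _ E (Sum.inr 0) ∘ₗ N.subtype) (by
        rintro ⟨y, hy⟩
        refine (X.exact_A0 _).1 ?_
        refine (totD_apply E X.d y (Sum.inr 0)).symm.trans ?_
        have : totD E X.d y = 0 := hy
        rw [this]; rfl)
  have hps : p₀ ∘ₗ s₀ = LinearMap.id := by
    refine LinearMap.ext fun x => Subtype.ext ?_
    exact DirectSum.component.lof_self R (M := E) (Sum.inr 0) x.1
  let D' : (⨁ i, E i) →ₗ[R] N := LinearMap.codRestrict N D fun x => hD.apply_apply_eq_zero x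
  let f : N →ₗ[R] ((⨁ n, E (Sum.inl n)) × (⨁ n, E (Sum.inr n))) := e.toLinearMap ∘ₗ N.subtype
  let g : ((⨁ n, E (Sum.inl n)) × (⨁ n, E (Sum.inr n))) →ₗ[R] N := D' ∘ₗ e.symm.toLinearMap
  have hf : Function.Injective f := e.injective.comp N.injective_subtype
  have hg : Function.Surjective g := by
    refine Function.Surjective.comp (g := D') ?_ e.symm.surjective
    rintro ⟨y, hy⟩
    obtain ⟨x, hx⟩ := (hD y).1 hy
    exact ⟨x, Subtype.ext hx⟩
  have hfg : Function.Exact f g := by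
    intro t
    constructor
    · intro ht
      exact ⟨⟨e.symm t, congrArg Subtype.val ht⟩, e.apply_symm_apply t⟩
    · rintro ⟨y, rfl⟩
      refine Subtype.ext ?_
      change D (e.symm (e y.1)) = 0
      rw [e.symm_apply_apply]
      exact y.2
  have hge : N.subtype ∘ₗ g ∘ₗ e.toLinearMap = D := by
    refine LinearMap.ext fun x => ?_
    change D (e.symm (e x)) = D x
    rw [e.symm_apply_apply]
  refine ⟨ModuleCat.of R N, s₀ ∘ₗ φ.toLinearMap, φ.symm.toLinearMap ∘ₗ p₀, ?_,
    ModuleCat.of R (⨁ n, X.P n), ModuleCat.of R (⨁ n, X.A n), f, g, ?_, ?_, ⟨hf, hfg, hg⟩, ?_⟩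
  · refine LinearMap.ext fun x => ?_
    have := LinearMap.congr_fun hps (φ x)
    change φ.symm ((p₀ ∘ₗ s₀) (φ x)) = x
    rw [this]
    exact φ.symm_apply_apply x
  · have := X.projP
    change Module.Projective R (Π₀ n, X.P n)
    infer_instance
  · exact addClass_directSum C X.A X.memA
  · intro Y hY
    exact ses_tensor D e f g rfl hge hfg hg Y
      (totD_tensor_exact E X.d Y (X.d_tensor_exact Y hY))
end

section
/- Let C be a Tor-∏-orthogonal pure projective left R-module, and suppose the class PG_CF(R) of projectively coresolved G_C-flat modules satisfies PG_CF(R) ⊆ ^⊥⟨C⟩ (i.e., Ext^{i≥1}_R(M, A) = 0 for all M ∈ PG_CF(R) and A ∈ ⟨C⟩) and is projectively resolving. Then every G_C-projective module of finite PG_CF dimension is PG_CF; more precisely, if M is a module with PG_CF-pd(M) < ∞, then G_C-pd(M) = PG_CF-pd(M). -/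
open CategoryTheory CategoryTheory.Limits

set_option autoImplicit false

universe u

variable {R : Type u} [CommRing R]

/-- `M` has an `𝒳`-resolution of length at most `n`. -/
def ResDimLE (𝒳 : ModuleCat.{u} R → Prop) : ℕ → ModuleCat.{u} R → Prop
  | 0, M => 𝒳 M
  | (n + 1), M => ∃ (A : ModuleCat.{u} R) (g : A →ₗ[R] M),
      𝒳 A ∧ Function.Surjective g ∧ ResDimLE 𝒳 n (ModuleCat.of R (LinearMap.ker g))

/-- Vanishing of `Ext^n_R(A, B)` (computed in the abelian category of `R`-modules). -/
def extZero (n : ℕ) (A B : ModuleCat.{u} R) : Prop :=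
  Limits.IsZero (((Ext ℤ (ModuleCat.{u} R) n).obj (Opposite.op A)).obj B)

/-- A class of modules is definable if it is closed under direct products, (filtered)
direct limits, and pure submodules. -/
def Definable (D : ModuleCat.{u} R → Prop) : Prop :=
  (∀ (ι : Type u) (f : ι → ModuleCat.{u} R), (∀ i, D (f i)) →
    D (ModuleCat.of R (∀ i, f i))) ∧
  (∀ (J : Type u) [SmallCategory J] [IsFiltered J] (F : J ⥤ ModuleCat.{u} R),
    (∀ j, D (F.obj j)) → D (Limits.colimit F)) ∧
  (∀ (A B : ModuleCat.{u} R) (e : A →ₗ[R] B), Function.Injective e →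
    (∀ (K : Type u) [AddCommGroup K] [Module R K],
      Function.Injective (LinearMap.lTensor K e)) → D B → D A)

/-- The definable closure of a class of modules. -/
def defClosure (𝒳 : ModuleCat.{u} R → Prop) : ModuleCat.{u} R → Prop :=
  fun M => ∀ D : ModuleCat.{u} R → Prop, Definable D → (∀ N, 𝒳 N → D N) → D M

/-- A totally acyclic complex `⋯ → P₁ → P₀ → A₀ → A₁ → ⋯` with the `Pᵢ` projective and the
`Aⱼ` in `Add_R(C)`, which stays exact after applying `Hom_R(-, W)` for `W ∈ Add_R(C)`.
Modules isomorphic to the image of the middle map are the `G_C`-projective modules. -/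
structure GCComplex (C : ModuleCat.{u} R) where
  P : ℕ → ModuleCat.{u} R
  A : ℕ → ModuleCat.{u} R
  projP : ∀ n, Module.Projective R (P n)
  memA : ∀ n, AddClass C (A n)
  dP : ∀ n, P (n + 1) →ₗ[R] P n
  mid : P 0 →ₗ[R] A 0
  dA : ∀ n, A n →ₗ[R] A (n + 1)
  exact_P : ∀ n, Function.Exact (dP (n + 1)) (dP n)
  exact_mid : Function.Exact (dP 0) mid
  exact_A0 : Function.Exact mid (dA 0)
  exact_A : ∀ n, Function.Exact (dA n) (dA (n + 1))
  hom_exact : ∀ W : ModuleCat.{u} R, AddClass C W →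
    (∀ n, Function.Exact (fun ψ : A (n + 2) →ₗ[R] W => ψ ∘ₗ dA (n + 1))
      (fun ψ : A (n + 1) →ₗ[R] W => ψ ∘ₗ dA n)) ∧
    Function.Exact (fun ψ : A 1 →ₗ[R] W => ψ ∘ₗ dA 0)
      (fun ψ : A 0 →ₗ[R] W => ψ ∘ₗ mid) ∧
    Function.Exact (fun ψ : A 0 →ₗ[R] W => ψ ∘ₗ mid)
      (fun ψ : P 0 →ₗ[R] W => ψ ∘ₗ dP 0) ∧
    ∀ n, Function.Exact (fun ψ : P n →ₗ[R] W => ψ ∘ₗ dP n)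
      (fun ψ : P (n + 1) →ₗ[R] W => ψ ∘ₗ dP (n + 1))

/-- `M` is `G_C`-projective. -/
def IsGCP (C M : ModuleCat.{u} R) : Prop :=
  ∃ X : GCComplex C, Nonempty (M ≃ₗ[R] ↥(LinearMap.range X.mid))

/-- `C` is pure projective: it lifts along every pure epimorphism. -/
def PureProjective (C : ModuleCat.{u} R) : Prop :=
  ∀ (A B : ModuleCat.{u} R) (g : A →ₗ[R] B), Function.Surjective g →
    (∀ (K : Type u) [AddCommGroup K] [Module R K],
      Function.Injective (LinearMap.lTensor K (LinearMap.ker g).subtype)) →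
    ∀ h : C →ₗ[R] B, ∃ l : C →ₗ[R] A, g ∘ₗ l = h

/-- `Ext^i(M, W) = 0` for all `i > n` and all `W` of finite `Add(C)`-resolution dimension. -/
def ExtBound (C : ModuleCat.{u} R) (n : ℕ) (M : ModuleCat.{u} R) : Prop :=
  ∀ (k : ℕ) (W : ModuleCat.{u} R), ResDimLE (AddClass C) k W →
    ∀ i, n < i → ∀ x : Abelian.Ext.{u} M W i, x = 0

theorem shortExact_of_isSES {A B D : ModuleCat.{u} R} {f : A →ₗ[R] B} {g : B →ₗ[R] D}
    (h : IsSES f g) : ∃ w, (ShortComplex.mk (ModuleCat.ofHom f) (ModuleCat.ofHom g) w).ShortExact := by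
  obtain ⟨h1, h2, h3⟩ := h
  refine ⟨by ext x; exact h2.apply_apply_eq_zero x, ?_⟩
  refine ShortComplex.ShortExact.mk' ?_ ?_ ?_
  · rw [ShortComplex.ShortExact.moduleCat_exact_iff_function_exact]
    exact h2
  · exact (ModuleCat.mono_iff_injective _).2 h1
  · exact (ModuleCat.epi_iff_surjective _).2 h3

theorem isSES_ker {B D : ModuleCat.{u} R} {g : B →ₗ[R] D} (hg : Function.Surjective g) :
    IsSES (A := ModuleCat.of R (LinearMap.ker g)) (LinearMap.ker g).subtype g :=
  ⟨Subtype.val_injective, fun x => by simp, hg⟩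

theorem ext_vanish (W : ModuleCat.{u} R) (i : ℕ) :
    ∀ (P : ℕ → ModuleCat.{u} R) (d : ∀ n, P (n + 1) →ₗ[R] P n) (M : ModuleCat.{u} R)
      (π : P 0 →ₗ[R] M), (∀ n, Module.Projective R (P n)) →
      (∀ n, Function.Exact (d (n + 1)) (d n)) → Function.Exact (d 0) π →
      Function.Surjective π →
      (∀ n (φ : P (n + 1) →ₗ[R] W), φ ∘ₗ d (n + 1) = 0 → ∃ ψ : P n →ₗ[R] W, ψ ∘ₗ d n = φ) →
      ∀ x : Abelian.Ext.{u} M W (i + 1), x = 0 := by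
  induction i with
  | zero =>
    intro P d M π hP hd h0 hπ hW x
    obtain ⟨w, hS⟩ := shortExact_of_isSES (isSES_ker hπ)
    have : Projective (P 0) := (IsProjective.iff_projective (P 0)).1 (hP 0)
    obtain ⟨x1, rfl⟩ := Abelian.Ext.contravariant_sequence_exact₃ hS W x
      (Abelian.Ext.eq_zero_of_projective (P := P 0) (n := 0) _) (n₀ := 0) rfl
    obtain ⟨φ, rfl⟩ := (Abelian.Ext.mk₀_bijective _ _).2 x1
    let d0 : P 1 →ₗ[R] LinearMap.ker π :=
      (d 0).codRestrict (LinearMap.ker π) (fun y => h0.apply_apply_eq_zero y)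
    obtain ⟨ψ, hψ⟩ := hW 0 (φ.hom ∘ₗ d0) (by
      ext y
      have : d0 (d 1 y) = 0 := Subtype.ext ((hd 0).apply_apply_eq_zero y)
      change φ.hom (d0 (d 1 y)) = 0
      rw [this]; exact map_zero _)
    have hφ : φ = ModuleCat.ofHom (LinearMap.ker π).subtype ≫ ModuleCat.ofHom ψ := by
      ext y
      obtain ⟨z, hz⟩ := (h0 y.1).1 y.2
      have hz' : d0 z = y := Subtype.ext hz
      have := LinearMap.congr_fun hψ z
      change φ.hom y = ψ y.1
      rw [← hz, ← hz']
      exact this.symm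
    rw [hφ, ← Abelian.Ext.mk₀_comp_mk₀]
    exact ShortComplex.ShortExact.extClass_comp_assoc hS (h := rfl) _
  | succ i ih =>
    intro P d M π hP hd h0 hπ hW x
    obtain ⟨w, hS⟩ := shortExact_of_isSES (isSES_ker hπ)
    have : Projective (P 0) := (IsProjective.iff_projective (P 0)).1 (hP 0)
    obtain ⟨x1, rfl⟩ := Abelian.Ext.contravariant_sequence_exact₃ hS W x
      (Abelian.Ext.eq_zero_of_projective (P := P 0) (n := i + 1) _) (n₀ := i + 1)
      (by omega)
    have := ih (fun n => P (n + 1)) (fun n => d (n + 1)) (ModuleCat.of R (LinearMap.ker π))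
      ((d 0).codRestrict (LinearMap.ker π) (fun y => h0.apply_apply_eq_zero y))
      (fun n => hP _) (fun n => hd _)
      (fun y => by
        rw [← hd 0 y]
        exact Subtype.ext_iff)
      (fun y => by
        obtain ⟨z, hz⟩ := (h0 y.1).1 y.2
        exact ⟨z, Subtype.ext hz⟩)
      (fun n => hW _) x1
    rw [this]
    exact Abelian.Ext.comp_zero _ _ _ _ _

theorem extBound_of_isGCP (C M : ModuleCat.{u} R) (h : IsGCP C M) : ExtBound C 0 M := by
  obtain ⟨X, ⟨e⟩⟩ := h
  intro k
  induction k with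
  | zero =>
    intro W hW i hi x
    obtain ⟨j, rfl⟩ : ∃ j, i = j + 1 := ⟨i - 1, by omega⟩
    refine ext_vanish W j X.P X.dP M (e.symm.toLinearMap ∘ₗ X.mid.rangeRestrict) X.projP X.exact_P
      (fun y => ?_) ?_ (fun n φ hφ => ?_) x
    · rw [← X.exact_mid y]
      simp [Subtype.ext_iff]
    · exact e.symm.surjective.comp X.mid.surjective_rangeRestrict
    · exact ((X.hom_exact W hW).2.2.2 n φ).1 hφ
  | succ k ih =>
    rintro W ⟨A, g, hA, hg, hK⟩ i hi x
    obtain ⟨w, hS⟩ := shortExact_of_isSES (isSES_ker hg)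
    have h0 : ∀ y : Abelian.Ext.{u} M A i, y = 0 := by
      obtain ⟨j, rfl⟩ : ∃ j, i = j + 1 := ⟨i - 1, by omega⟩
      refine ext_vanish A j X.P X.dP M (e.symm.toLinearMap ∘ₗ X.mid.rangeRestrict) X.projP
        X.exact_P (fun y => ?_) ?_ (fun n φ hφ => ?_)
      · rw [← X.exact_mid y]
        simp [Subtype.ext_iff]
      · exact e.symm.surjective.comp X.mid.surjective_rangeRestrict
      · exact ((X.hom_exact A hA).2.2.2 n φ).1 hφ
    obtain ⟨x2, rfl⟩ := Abelian.Ext.covariant_sequence_exact₃ M hS x (n₁ := i + 1) rfl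
      (ih _ hK (i + 1) (by omega) _)
    rw [h0 x2]
    exact Abelian.Ext.zero_comp (C := ModuleCat.{u} R) _ _ _ _ _

theorem extBound_of_resDim (C : ModuleCat.{u} R) (n : ℕ) :
    ∀ M : ModuleCat.{u} R, ResDimLE (IsGCP C) n M → ExtBound C n M := by
  induction n with
  | zero => exact fun M h => extBound_of_isGCP C M h
  | succ n ih =>
    rintro M ⟨A, g, hA, hg, hK⟩ k W hW i hi x
    obtain ⟨w, hS⟩ := shortExact_of_isSES (isSES_ker hg)
    obtain ⟨j, rfl⟩ : ∃ j, i = 1 + j := ⟨i - 1, by omega⟩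
    obtain ⟨x1, rfl⟩ := Abelian.Ext.contravariant_sequence_exact₃ hS W x
      (extBound_of_isGCP C A hA k W hW _ (by omega) _) (n₀ := j) rfl
    rw [ih _ hK k W hW j (by omega) x1]
    exact Abelian.Ext.comp_zero _ _ _ _ _

theorem extBound_ker (C : ModuleCat.{u} R) (n : ℕ) {G M : ModuleCat.{u} R} (g : G →ₗ[R] M)
    (hg : Function.Surjective g) (hG : ExtBound C 0 G) (hM : ExtBound C (n + 1) M) :
    ExtBound C n (ModuleCat.of R (LinearMap.ker g)) := by
  intro k W hW i hi x
  obtain ⟨w, hS⟩ := shortExact_of_isSES (isSES_ker hg)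
  obtain ⟨x2, rfl⟩ := Abelian.Ext.contravariant_sequence_exact₁ hS W x (n₁ := 1 + i) rfl
    (hM k W hW _ (by omega) _)
  rw [hG k W hW i (by omega) x2]
  exact Abelian.Ext.comp_zero _ _ _ _ _

theorem split_of_extBound (C : ModuleCat.{u} R) {X G M : ModuleCat.{u} R} {f : X →ₗ[R] G}
    {g : G →ₗ[R] M} (h : IsSES f g) (k : ℕ) (hX : ResDimLE (AddClass C) k X)
    (hM : ExtBound C 0 M) : ∃ s : M →ₗ[R] G, g ∘ₗ s = LinearMap.id := by
  obtain ⟨w, hS⟩ := shortExact_of_isSES h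
  obtain ⟨x2, hx⟩ := Abelian.Ext.covariant_sequence_exact₃ M hS (Abelian.Ext.mk₀ (𝟙 M))
    (n₁ := 1) rfl (hM k X hX 1 (by omega) _)
  obtain ⟨s, rfl⟩ := (Abelian.Ext.mk₀_bijective _ _).2 x2
  rw [Abelian.Ext.mk₀_comp_mk₀] at hx
  have := (Abelian.Ext.mk₀_bijective _ _).1 hx
  exact ⟨s.hom, by ext y; exact congrArg (fun t : M ⟶ M => t.hom y) this⟩

theorem isPGCF_iso {C M N : ModuleCat.{u} R} (e : M ≃ₗ[R] N) (h : IsPGCF C N) : IsPGCF C M := by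
  obtain ⟨X, ⟨e'⟩⟩ := h
  exact ⟨X, ⟨e.trans e'⟩⟩

theorem exact_mapRange {A B D : Type u} [AddCommGroup A] [AddCommGroup B] [AddCommGroup D]
    [Module R A] [Module R B] [Module R D] {f : A →ₗ[R] B} {g : B →ₗ[R] D}
    (h : Function.Exact f g) :
    Function.Exact (Finsupp.mapRange.linearMap (α := ℕ) f) (Finsupp.mapRange.linearMap (α := ℕ) g) := by
  classical
  intro y
  constructor
  · intro hy
    have : ∀ n, ∃ a, f a = y n := fun n => (h (y n)).1 (DFunLike.congr_fun hy n)
    choose a ha using this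
    refine ⟨Finsupp.onFinset y.support (fun n => if y n = 0 then 0 else a n) ?_, ?_⟩
    · intro n hn
      rw [Finsupp.mem_support_iff]
      intro h0
      simp [h0] at hn
    · ext n
      simp only [Finsupp.mapRange.linearMap_apply, Finsupp.mapRange_apply,
        Finsupp.onFinset_apply]
      split_ifs with h0
      · rw [h0, map_zero]
      · exact ha n
  · rintro ⟨x, rfl⟩
    ext n
    simpa using h.apply_apply_eq_zero (x n)

theorem finsuppRight_nat {A B Y : Type u} [AddCommGroup A] [AddCommGroup B] [AddCommGroup Y]
    [Module R A] [Module R B] [Module R Y] (f : A →ₗ[R] B) (t : TensorProduct R Y (ℕ →₀ A)) :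
    TensorProduct.finsuppRight R R Y B ℕ
      (LinearMap.lTensor Y (Finsupp.mapRange.linearMap (α := ℕ) f) t) =
    Finsupp.mapRange.linearMap (α := ℕ) (LinearMap.lTensor Y f)
      (TensorProduct.finsuppRight R R Y A ℕ t) := by
  induction t with
  | zero => simp
  | add a b ha hb => rw [map_add, map_add, ha, hb, map_add, map_add]
  | tmul y p =>
    ext n
    simp [TensorProduct.finsuppRight_apply_tmul_apply]

theorem exact_lTensor_mapRange {A B D Y : Type u} [AddCommGroup A] [AddCommGroup B]
    [AddCommGroup D] [AddCommGroup Y]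
    [Module R A] [Module R B] [Module R D] [Module R Y] {f : A →ₗ[R] B} {g : B →ₗ[R] D}
    (h : Function.Exact (LinearMap.lTensor Y f) (LinearMap.lTensor Y g)) :
    Function.Exact (LinearMap.lTensor Y (Finsupp.mapRange.linearMap (α := ℕ) f))
      (LinearMap.lTensor Y (Finsupp.mapRange.linearMap (α := ℕ) g)) := by
  have h' := exact_mapRange h
  intro y
  rw [← (TensorProduct.finsuppRight R R Y D ℕ).map_eq_zero_iff, finsuppRight_nat, h' _]
  constructor
  · rintro ⟨x, hx⟩
    refine ⟨(TensorProduct.finsuppRight R R Y A ℕ).symm x, ?_⟩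
    apply (TensorProduct.finsuppRight R R Y B ℕ).injective
    rw [finsuppRight_nat, LinearEquiv.apply_symm_apply, hx]
  · rintro ⟨x, rfl⟩
    exact ⟨_, (finsuppRight_nat f x).symm⟩

theorem addClass_finsupp {C A : ModuleCat.{u} R} (h : AddClass C A) :
    AddClass C (ModuleCat.of R (ℕ →₀ A)) := by
  obtain ⟨ι, s, p, hps⟩ := h
  let e : (ℕ × ι →₀ C) ≃ₗ[R] (ℕ →₀ (ι →₀ C)) := Finsupp.curryLinearEquiv R
  refine ⟨ℕ × ι, e.symm.toLinearMap ∘ₗ Finsupp.mapRange.linearMap s,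
    Finsupp.mapRange.linearMap p ∘ₗ e.toLinearMap, ?_⟩
  apply LinearMap.ext
  intro x
  change Finsupp.mapRange.linearMap p (e (e.symm (Finsupp.mapRange.linearMap s x))) = x
  rw [LinearEquiv.apply_symm_apply]
  apply Finsupp.ext
  intro n
  simpa using LinearMap.congr_fun hps (x n)

/-- Countable copower of a `PGCFComplex`. -/
noncomputable def PGCFComplex.copower {C : ModuleCat.{u} R} (X : PGCFComplex C) :
    PGCFComplex C where
  P n := ModuleCat.of R (ℕ →₀ X.P n)
  A n := ModuleCat.of R (ℕ →₀ X.A n)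
  projP n := by
    classical
    have := X.projP n
    exact Module.Projective.of_equiv (finsuppLequivDFinsupp R (ι := ℕ) (M := X.P n)).symm
  memA n := addClass_finsupp (X.memA n)
  dP n := Finsupp.mapRange.linearMap (X.dP n)
  mid := Finsupp.mapRange.linearMap X.mid
  dA n := Finsupp.mapRange.linearMap (X.dA n)
  exact_P n := exact_mapRange (X.exact_P n)
  exact_mid := exact_mapRange X.exact_mid
  exact_A0 := exact_mapRange X.exact_A0
  exact_A n := exact_mapRange (X.exact_A n)
  tensor_exact Y hY := by
    obtain ⟨a, b, c, d⟩ := X.tensor_exact Y hY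
    exact ⟨fun n => exact_lTensor_mapRange (a n), exact_lTensor_mapRange b,
      exact_lTensor_mapRange c, fun n => exact_lTensor_mapRange (d n)⟩

theorem isPGCF_copower {C G : ModuleCat.{u} R} (h : IsPGCF C G) :
    IsPGCF C (ModuleCat.of R (ℕ →₀ G)) := by
  obtain ⟨X, ⟨e⟩⟩ := h
  refine ⟨X.copower, ⟨?_⟩⟩
  let j : (ℕ →₀ G) →ₗ[R] (ℕ →₀ X.A 0) :=
    Finsupp.mapRange.linearMap ((LinearMap.range X.mid).subtype ∘ₗ e.toLinearMap)
  have hj : Function.Injective j := by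
    intro x y hxy
    ext n
    have := DFunLike.congr_fun hxy n
    exact e.injective (Subtype.ext this)
  have hr : LinearMap.range j = LinearMap.range X.copower.mid := by
    have hex : Function.Exact ((LinearMap.range X.mid).subtype ∘ₗ e.toLinearMap) (X.dA 0) := by
      intro y
      rw [X.exact_A0 y]
      constructor
      · rintro ⟨z, rfl⟩
        exact ⟨e.symm ⟨_, z, rfl⟩, by simp⟩
      · rintro ⟨z, rfl⟩
        exact (e z).2
    have h1 := exact_mapRange hex
    have h2 := exact_mapRange X.exact_A0
    ext y
    exact (h1 y).symm.trans (h2 y)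
  exact (LinearEquiv.ofInjective j hj).trans (LinearEquiv.ofEq _ _ hr)

/-- Eilenberg swindle: a retract of a `PG_CF` module is `PG_CF`. -/
theorem isPGCF_retract {C G M : ModuleCat.{u} R}
    (h4ker : ∀ (A B D : ModuleCat.{u} R) (f : A →ₗ[R] B) (g : B →ₗ[R] D),
      IsSES f g → IsPGCF C B → IsPGCF C D → IsPGCF C A)
    (hG : IsPGCF C G) (s : M →ₗ[R] G) (g : G →ₗ[R] M) (hs : g ∘ₗ s = LinearMap.id) :
    IsPGCF C M := by
  have hgs : ∀ m, g (s m) = m := LinearMap.congr_fun hs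
  have hH := isPGCF_copower hG
  let e : G →ₗ[R] G := s ∘ₗ g
  have he : ∀ x, e (e x) = e x := fun x => by simp [e, hgs]
  let sh : (ℕ →₀ G) →ₗ[R] (ℕ →₀ G) :=
    Finsupp.lcomapDomain Nat.succ Nat.succ_injective
  let up : (ℕ →₀ G) →ₗ[R] (ℕ →₀ G) := Finsupp.lmapDomain G R Nat.succ
  have hsh : ∀ x n, sh x n = x (n + 1) := fun x n => rfl
  have hup0 : ∀ x, up x 0 = 0 := fun x =>
    Finsupp.mapDomain_of_notMem_range _ _ (by simp)
  have hup : ∀ x n, up x (n + 1) = x n := fun x n =>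
    Finsupp.mapDomain_apply Nat.succ_injective _ _
  let φ : (ℕ →₀ G) →ₗ[R] (ℕ →₀ G) :=
    Finsupp.mapRange.linearMap (LinearMap.id - e) + Finsupp.mapRange.linearMap e ∘ₗ sh
  have hφ : ∀ x n, φ x n = x n - e (x n) + e (x (n + 1)) := fun x n => rfl
  refine h4ker M (ModuleCat.of R (ℕ →₀ G)) (ModuleCat.of R (ℕ →₀ G))
    (Finsupp.lsingle 0 ∘ₗ s) φ ⟨?_, ?_, ?_⟩ hH hH
  · intro a b hab
    have : s a = s b := Finsupp.single_injective 0 hab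
    rw [← hgs a, this, hgs]
  · intro x
    constructor
    · intro hx
      have hn : ∀ n, x n - e (x n) + e (x (n + 1)) = 0 := fun n => by
        rw [← hφ, hx]; rfl
      have h1 : ∀ n, e (x (n + 1)) = 0 := fun n => by
        have := congrArg e (hn n)
        simpa [he] using this
      have h2 : ∀ n, x n = e (x n) := fun n => by
        have := hn n
        rw [h1, add_zero] at this
        exact sub_eq_zero.1 this
      refine ⟨g (x 0), ?_⟩
      apply Finsupp.ext
      intro n
      change Finsupp.single 0 (e (x 0)) n = x n
      cases n with
      | zero => rw [Finsupp.single_eq_same, ← h2]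
      | succ n => rw [h2 (n + 1), h1]; simp
    · rintro ⟨m, rfl⟩
      apply Finsupp.ext
      intro n
      rw [hφ]
      change Finsupp.single 0 (s m) n - e (Finsupp.single 0 (s m) n) +
        e (Finsupp.single 0 (s m) (n + 1)) = 0
      cases n with
      | zero => simp [e, hgs]
      | succ n => simp
  · intro k
    refine ⟨Finsupp.mapRange.linearMap (LinearMap.id - e) k + Finsupp.mapRange.linearMap e (up k),
      ?_⟩
    apply Finsupp.ext
    intro n
    rw [hφ]
    have h1 : ∀ n, ((Finsupp.mapRange.linearMap (LinearMap.id - e) k +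
        Finsupp.mapRange.linearMap e (up k) : ℕ →₀ G)) n = k n - e (k n) + e (up k n) := fun n => rfl
    rw [h1, h1, hup]
    simp only [map_add, map_sub, he]
    abel

theorem resDim_succ {C : ModuleCat.{u} R}
    (h4proj : ∀ P : ModuleCat.{u} R, Module.Projective R P → IsPGCF C P) (n : ℕ) :
    ∀ M : ModuleCat.{u} R, ResDimLE (IsPGCF C) n M → ResDimLE (IsPGCF C) (n + 1) M := by
  induction n with
  | zero =>
    intro M h
    refine ⟨M, LinearMap.id, h, Function.surjective_id, ?_⟩
    apply h4proj
    have : Subsingleton (LinearMap.ker (LinearMap.id : M →ₗ[R] M)) := by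
      rw [LinearMap.ker_id]; infer_instance
    exact inferInstanceAs (Module.Projective R (LinearMap.ker (LinearMap.id : M →ₗ[R] M)))
  | succ n ih =>
    rintro M ⟨A, g, hA, hg, hK⟩
    exact ⟨A, g, hA, hg, ih _ hK⟩

theorem resDim_mono {X Y : ModuleCat.{u} R → Prop} (h : ∀ M, X M → Y M) (n : ℕ) :
    ∀ M : ModuleCat.{u} R, ResDimLE X n M → ResDimLE Y n M := by
  induction n with
  | zero => exact h
  | succ n ih =>
    rintro M ⟨A, g, hA, hg, hK⟩
    exact ⟨A, g, h _ hA, hg, ih _ hK⟩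

/-- Let `C` be Tor-∏-orthogonal and pure projective, assume
`PG_CF(R) ⊆ ^⊥⟨C⟩` and that `PG_CF(R)` is projectively resolving. Then (together with the
facts recorded from the paper) every `G_C`-projective module of finite `PG_CF` dimension is
`PG_CF`; more precisely, if `M` has finite `PG_CF` dimension then its `G_C`-projective
dimension equals its `PG_CF` dimension. -/
theorem statement16 (C : ModuleCat.{u} R)
    (h1 : TorProdOrthogonal C) (h2 : PureProjective C)
    (h3 : ∀ M : ModuleCat.{u} R, IsPGCF C M → ∀ A : ModuleCat.{u} R,
      defClosure (fun N => N = C) A → ∀ i, 1 ≤ i → extZero i M A)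
    (h4proj : ∀ P : ModuleCat.{u} R, Module.Projective R P → IsPGCF C P)
    (h4ext : ∀ (A B D : ModuleCat.{u} R) (f : A →ₗ[R] B) (g : B →ₗ[R] D),
      IsSES f g → IsPGCF C A → IsPGCF C D → IsPGCF C B)
    (h4ker : ∀ (A B D : ModuleCat.{u} R) (f : A →ₗ[R] B) (g : B →ₗ[R] D),
      IsSES f g → IsPGCF C B → IsPGCF C D → IsPGCF C A)
    (hfact1 : ∀ M : ModuleCat.{u} R, IsPGCF C M → IsGCP C M)
    (hfact2 : ∀ X : ModuleCat.{u} R, (∃ n, ResDimLE (AddClass C) n X) →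
      ∀ G : ModuleCat.{u} R, IsPGCF C G → extZero 1 G X)
    (hfact3 : ∀ (M : ModuleCat.{u} R) (n : ℕ), ResDimLE (IsPGCF C) n M →
      ∃ (X G : ModuleCat.{u} R) (f : X →ₗ[R] G) (g : G →ₗ[R] M),
        IsSES f g ∧ IsPGCF C G ∧
        (if n = 0 then Subsingleton X else ResDimLE (AddClass C) (n - 1) X))
    (M : ModuleCat.{u} R) (hfin : ∃ n, ResDimLE (IsPGCF C) n M) :
    (∀ n, ResDimLE (IsPGCF C) n M ↔ ResDimLE (IsGCP C) n M) ∧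
    (IsGCP C M → IsPGCF C M) := by
  have key : ∀ (n m : ℕ) (M : ModuleCat.{u} R), ResDimLE (IsPGCF C) m M → ExtBound C n M →
      ResDimLE (IsPGCF C) n M := by
    intro n
    induction n with
    | zero =>
      intro m M hm hM
      obtain ⟨X, G, f, g, hS, hG, hX⟩ := hfact3 M m hm
      cases m with
      | zero => exact hm
      | succ m =>
        rw [if_neg (by omega)] at hX
        obtain ⟨s, hs⟩ := split_of_extBound C hS _ hX hM
        exact isPGCF_retract h4ker hG s g hs
    | succ n ih =>
      intro m M hm hM
      cases m with
      | zero =>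
        have : ∀ k, ResDimLE (IsPGCF C) k M := by
          intro k
          induction k with
          | zero => exact hm
          | succ k ihk => exact resDim_succ h4proj k M ihk
        exact this _
      | succ m =>
        obtain ⟨A, g, hA, hg, hK⟩ := hm
        exact ⟨A, g, hA, hg, ih m _ hK
          (extBound_ker C n g hg (extBound_of_isGCP C A (hfact1 A hA)) hM)⟩
  obtain ⟨m, hm⟩ := hfin
  have main : ∀ n, ResDimLE (IsPGCF C) n M ↔ ResDimLE (IsGCP C) n M := fun n =>
    ⟨resDim_mono hfact1 n M, fun h => key n m M hm (extBound_of_resDim C n M h)⟩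
  exact ⟨main, (main 0).2⟩
end
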